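/- Slow growth of the total weight under a multiplicative-weights regression update: Let ρ > 0, r, s ∈ ℝⁿ with r, s ≥ 0 entrywise, A ∈ ℝ^{n×d}, b ∈ ℝ^d, and w ∈ ℝⁿ with w ≥ 0 entrywise and w ≠ 0. Define w̃ ∈ ℝⁿ by w̃ᵢ := ‖w‖₁·rᵢ + (wᵢ + ‖w‖₁/n)·sᵢ². Suppose there exists Δ̄ ∈ ℝⁿ with AᵀΔ̄ = b and ‖Δ̄‖_r² + ‖s⊙Δ̄‖_∞ ≤ 1, and let Δ* ∈ ℝⁿ satisfy AᵀΔ* = b and ‖Δ*‖_{w̃}² ≤ ‖Δ‖_{w̃}² for every Δ with AᵀΔ = b. Then for every Δ ∈ ℝⁿ, the updated weights w′ᵢ := wᵢ·(1 + |sᵢ·Δᵢ|/ρ) satisfy ‖w′‖₁ ≤ (1 + (√6 + ‖s⊙(Δ − Δ*)‖_∞)/ρ)·‖w‖₁. -/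

import Mathlib

/-!
Write `W = ‖w‖₁`. The competitor `Δbar` has small energy: with `M = ‖s ⊙ Δbar‖_∞ ≤ 1`, and since the
coefficients `wᵢ + W/n` sum to `2W`,
`‖Δbar‖_wt² ≤ W ‖Δbar‖_r² + 2 W M² ≤ 2 W (‖Δbar‖_r² + M) ≤ 2 W` (`wsq_wt_le`).
By minimality `Δstar` has energy at most `2 W` too, hence `∑ wᵢ (sᵢ Δstarᵢ)² ≤ 2 W`, and
`|x| ≤ (1 + x²) / 2` gives `∑ wᵢ |sᵢ Δstarᵢ| ≤ (3/2) W ≤ √6 W`. The triangle inequality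
`|sᵢ Δᵢ| ≤ |sᵢ Δstarᵢ| + ‖s ⊙ (Δ - Δstar)‖_∞`, averaged against `w`, bounds the growth
`(1/ρ) ∑ wᵢ |sᵢ Δᵢ|` of the total weight.
-/

open Matrix

/-- Weighted square norm: `‖Δ‖_u² = Σᵢ uᵢ Δᵢ²`. -/
noncomputable def wsq {ι : Type*} [Fintype ι] (u Δ : ι → ℝ) : ℝ :=
  ∑ i, u i * (Δ i) ^ 2

/-- The `∞`-norm of a vector: `‖v‖_∞ = maxᵢ |vᵢ|`. -/
noncomputable def linfNorm {ι : Type*} [Fintype ι] (v : ι → ℝ) : ℝ :=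
  ⨆ i, |v i|

/-- The `1`-norm of a vector: `‖v‖₁ = Σᵢ |vᵢ|`. -/
noncomputable def l1Norm {ι : Type*} [Fintype ι] (v : ι → ℝ) : ℝ :=
  ∑ i, |v i|

lemma abs_le_linfNorm {ι : Type*} [Fintype ι] (v : ι → ℝ) (i : ι) : |v i| ≤ linfNorm v :=
  le_ciSup (f := fun i => |v i|) (Set.finite_range _).bddAbove i

lemma linfNorm_nonneg {ι : Type*} [Fintype ι] (v : ι → ℝ) : 0 ≤ linfNorm v :=
  Real.iSup_nonneg fun _ => abs_nonneg _

lemma wsq_nonneg {ι : Type*} [Fintype ι] {u : ι → ℝ} (hu : ∀ i, 0 ≤ u i) (Δ : ι → ℝ) :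
    0 ≤ wsq u Δ :=
  Finset.sum_nonneg fun i _ => mul_nonneg (hu i) (sq_nonneg _)

lemma l1Norm_eq_sum {ι : Type*} [Fintype ι] {w : ι → ℝ} (hw : ∀ i, 0 ≤ w i) :
    l1Norm w = ∑ i, w i :=
  Finset.sum_congr rfl fun i _ => abs_of_nonneg (hw i)

/-- A vector in the unit ball of the mixed norm has energy at most `2‖w‖₁` for the reweighted
quadratic form. -/
lemma wsq_wt_le {n : ℕ} {r s w wt : Fin n → ℝ} (hn : n ≠ 0) (hr : ∀ i, 0 ≤ r i)
    (hw : ∀ i, 0 ≤ w i)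
    (hwt : ∀ i, wt i = l1Norm w * r i + (w i + l1Norm w / (n : ℝ)) * (s i) ^ 2)
    {D : Fin n → ℝ} (hD : wsq r D + linfNorm (s * D) ≤ 1) :
    wsq wt D ≤ 2 * l1Norm w := by
  have hW : 0 ≤ l1Norm w := Finset.sum_nonneg fun i _ => abs_nonneg _
  have hR := wsq_nonneg hr D
  have hM := linfNorm_nonneg (s * D)
  have hn' : (n : ℝ) ≠ 0 := Nat.cast_ne_zero.mpr hn
  have hsum : ∑ i, (w i + l1Norm w / (n : ℝ)) = 2 * l1Norm w := by
    rw [Finset.sum_add_distrib, ← l1Norm_eq_sum hw]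
    simp only [Finset.sum_const, Finset.card_univ, Fintype.card_fin, nsmul_eq_mul]
    field_simp
    ring
  calc wsq wt D
      ≤ ∑ i, (l1Norm w * (r i * D i ^ 2)
          + (w i + l1Norm w / (n : ℝ)) * linfNorm (s * D) ^ 2) := by
        refine Finset.sum_le_sum fun i _ => ?_
        have hc : 0 ≤ w i + l1Norm w / (n : ℝ) := add_nonneg (hw i) (by positivity)
        have hsq : (s i * D i) ^ 2 ≤ linfNorm (s * D) ^ 2 := by
          rw [← sq_abs (s i * D i)]
          exact pow_le_pow_left₀ (abs_nonneg _) (abs_le_linfNorm (s * D) i) 2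
        have := mul_le_mul_of_nonneg_left hsq hc
        rw [hwt i]
        linarith
    _ = l1Norm w * wsq r D + 2 * l1Norm w * linfNorm (s * D) ^ 2 := by
        rw [Finset.sum_add_distrib, ← Finset.mul_sum, ← Finset.sum_mul, hsum, wsq]
    _ ≤ 2 * l1Norm w := by
        have hM2 : linfNorm (s * D) ^ 2 ≤ linfNorm (s * D) := by nlinarith
        have : wsq r D + 2 * linfNorm (s * D) ^ 2 ≤ 2 := by linarith
        nlinarith [mul_le_mul_of_nonneg_left this hW]

/-- Slow growth of the total weight under a multiplicative-weights regression update. -/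
theorem mwu_total_weight_growth
    {n d : ℕ}
    (ρ : ℝ) (hρ : 0 < ρ)
    (r s : Fin n → ℝ) (hr : ∀ i, 0 ≤ r i) (hs : ∀ i, 0 ≤ s i)
    (A : Matrix (Fin n) (Fin d) ℝ) (b : Fin d → ℝ)
    (w : Fin n → ℝ) (hw : ∀ i, 0 ≤ w i) (hw0 : w ≠ 0)
    (wt : Fin n → ℝ)
    (hwt : ∀ i, wt i = l1Norm w * r i + (w i + l1Norm w / (n : ℝ)) * (s i) ^ 2)
    (hex : ∃ Δbar : Fin n → ℝ,
      Aᵀ *ᵥ Δbar = b ∧ wsq r Δbar + linfNorm (s * Δbar) ≤ 1)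
    (Δstar : Fin n → ℝ)
    (hΔstar_feas : Aᵀ *ᵥ Δstar = b)
    (hΔstar_min : ∀ Δ : Fin n → ℝ, Aᵀ *ᵥ Δ = b → wsq wt Δstar ≤ wsq wt Δ) :
    ∀ Δ : Fin n → ℝ,
      l1Norm (fun i => w i * (1 + |s i * Δ i| / ρ)) ≤
        (1 + (Real.sqrt 6 + linfNorm (s * (Δ - Δstar))) / ρ) * l1Norm w := by
  intro D
  have hn : n ≠ 0 := by
    rintro rfl
    exact hw0 (Subsingleton.elim _ _)
  have hW : 0 ≤ l1Norm w := Finset.sum_nonneg fun i _ => abs_nonneg _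
  obtain ⟨Dbar, hfeas, hbar⟩ := hex
  have henergy : wsq wt Δstar ≤ 2 * l1Norm w :=
    (hΔstar_min Dbar hfeas).trans (wsq_wt_le hn hr hw hwt hbar)
  have hquad : ∑ i, w i * (s i * Δstar i) ^ 2 ≤ 2 * l1Norm w := by
    refine le_trans (Finset.sum_le_sum fun i _ => ?_) henergy
    have h1 : 0 ≤ l1Norm w * r i * Δstar i ^ 2 :=
      mul_nonneg (mul_nonneg hW (hr i)) (sq_nonneg _)
    have h2 : 0 ≤ l1Norm w / (n : ℝ) * (s i ^ 2 * Δstar i ^ 2) := by positivity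
    rw [hwt i]
    linarith
  have hlin : ∑ i, w i * |s i * Δstar i| ≤ Real.sqrt 6 * l1Norm w := by
    have h32 : (3 / 2 : ℝ) ≤ Real.sqrt 6 := Real.le_sqrt_of_sq_le (by norm_num)
    calc ∑ i, w i * |s i * Δstar i|
        ≤ ∑ i, (1 / 2 * w i + 1 / 2 * (w i * (s i * Δstar i) ^ 2)) := by
          refine Finset.sum_le_sum fun i _ => ?_
          rw [← sq_abs (s i * Δstar i)]
          nlinarith [mul_nonneg (hw i) (sq_nonneg (|s i * Δstar i| - 1))]
      _ = 1 / 2 * l1Norm w + 1 / 2 * ∑ i, w i * (s i * Δstar i) ^ 2 := by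
          rw [Finset.sum_add_distrib, ← Finset.mul_sum, ← Finset.mul_sum, l1Norm_eq_sum hw]
      _ ≤ 3 / 2 * l1Norm w := by linarith
      _ ≤ Real.sqrt 6 * l1Norm w := mul_le_mul_of_nonneg_right h32 hW
  have htri : ∑ i, w i * |s i * D i|
      ≤ (Real.sqrt 6 + linfNorm (s * (D - Δstar))) * l1Norm w := by
    calc ∑ i, w i * |s i * D i|
        ≤ ∑ i, (w i * |s i * Δstar i| + w i * linfNorm (s * (D - Δstar))) := by
          refine Finset.sum_le_sum fun i _ => ?_
          rw [← mul_add]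
          refine mul_le_mul_of_nonneg_left ?_ (hw i)
          have h1 : |s i * (D i - Δstar i)| ≤ linfNorm (s * (D - Δstar)) :=
            abs_le_linfNorm (s * (D - Δstar)) i
          have h2 : s i * D i = s i * Δstar i + s i * (D i - Δstar i) := by ring
          rw [h2]
          exact (abs_add_le _ _).trans (by linarith)
      _ = ∑ i, w i * |s i * Δstar i| + l1Norm w * linfNorm (s * (D - Δstar)) := by
          rw [Finset.sum_add_distrib, ← Finset.sum_mul, l1Norm_eq_sum hw]
      _ ≤ _ := by linarith
  calc l1Norm (fun i => w i * (1 + |s i * D i| / ρ))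
      = l1Norm w + (∑ i, w i * |s i * D i|) / ρ := by
        rw [l1Norm_eq_sum fun i => mul_nonneg (hw i) (by positivity), l1Norm_eq_sum hw,
          Finset.sum_div, ← Finset.sum_add_distrib]
        exact Finset.sum_congr rfl fun i _ => by ring
    _ ≤ l1Norm w + (Real.sqrt 6 + linfNorm (s * (D - Δstar))) * l1Norm w / ρ := by gcongr
    _ = _ := by ring
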